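/- Let G be a finite simple graph of order n ≥ 1 and let l = min { j : d(G,j) = C(n,j) }. If for every two distinct vertices u and v of degree δ(G) one has N[u] ≠ N[v], then G has exactly C(n, l−1) − d(G, l−1) vertices of degree δ(G) = n − l. -/

import Mathlib

/-- `S` is a dominating set of `G`: every vertex not in `S` is adjacent to some vertex of `S`. -/
def IsDomSet {V : Type*} (G : SimpleGraph V) (S : Finset V) : Prop :=
  ∀ v : V, v ∉ S → ∃ u ∈ S, G.Adj u v

/-- `d(G,i)`: the number of dominating sets of `G` of cardinality `i`. -/
noncomputable def domCount {V : Type*} (G : SimpleGraph V) (i : ℕ) : ℕ :=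
  {S : Finset V | IsDomSet G S ∧ S.card = i}.ncard

/-- `d_v(G,i)`: the number of dominating sets of `G` of cardinality `i` containing `v`. -/
noncomputable def domCountVert {V : Type*} (G : SimpleGraph V) (v : V) (i : ℕ) : ℕ :=
  {S : Finset V | IsDomSet G S ∧ S.card = i ∧ v ∈ S}.ncard

/-!
A set fails to dominate exactly when it misses the closed neighborhood `N[v]` of some vertex `v`,
so a non-dominating set has at most `n - δ - 1` elements. Those with exactly `n - δ - 1` elements
are the complements of the sets `N[v]` with `v` of degree `δ`, and there are as many of them as
vertices of degree `δ` once these vertices have distinct closed neighborhoods.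
-/

section

open Finset

variable {V : Type*} (G : SimpleGraph V)

/-- The closed neighborhood `N[v]`, as a `Finset`; dominating sets are those that meet every such
neighborhood. -/
def closedNeighborFinset [DecidableEq V] (v : V) [Fintype (G.neighborSet v)] : Finset V :=
  insert v (G.neighborFinset v)

/-- The number of vertex sets of cardinality `i` that are not dominating, the complementary count
to `domCount`. -/
noncomputable def nonDomCount (i : ℕ) : ℕ :=
  {S : Finset V | ¬ IsDomSet G S ∧ #S = i}.ncard

theorem card_closedNeighborFinset [DecidableEq V] (v : V) [Fintype (G.neighborSet v)] :
    #(closedNeighborFinset G v) = G.degree v + 1 := by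
  rw [closedNeighborFinset, card_insert_of_notMem (G.notMem_neighborFinset_self v),
    G.card_neighborFinset_eq_degree]

theorem not_isDomSet_iff_exists_disjoint [DecidableEq V] [G.LocallyFinite] {S : Finset V} :
    ¬ IsDomSet G S ↔ ∃ v, Disjoint (closedNeighborFinset G v) S := by
  unfold IsDomSet
  push Not
  refine exists_congr fun v ↦ ?_
  rw [closedNeighborFinset, disjoint_insert_left, disjoint_right]
  simp only [G.mem_neighborFinset, G.adj_comm v]

theorem domCount_add_nonDomCount [Fintype V] (j : ℕ) :
    domCount G j + nonDomCount G j = (Fintype.card V).choose j := by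
  classical
  rw [domCount, nonDomCount, ← card_univ, ← card_powersetCard,
    ← card_filter_add_card_filter_not (IsDomSet G), ← Set.ncard_coe_finset,
    ← Set.ncard_coe_finset]
  simp only [coe_filter, mem_powersetCard_univ, and_comm]

section MinDegree

variable [Fintype V] [DecidableRel G.Adj]

theorem card_add_minDegree_lt_of_not_isDomSet {S : Finset V} (hS : ¬ IsDomSet G S) :
    #S + G.minDegree < Fintype.card V := by
  classical
  obtain ⟨v, hv⟩ := (not_isDomSet_iff_exists_disjoint G).1 hS
  have hcard : #(closedNeighborFinset G v) + #S ≤ Fintype.card V :=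
    card_union_of_disjoint hv ▸ card_le_univ _
  have hdeg := G.minDegree_le_degree v
  rw [card_closedNeighborFinset] at hcard
  lia

theorem exists_not_isDomSet_card_eq {j : ℕ} (hj : j + G.minDegree < Fintype.card V) :
    ∃ S, ¬ IsDomSet G S ∧ #S = j := by
  classical
  have : Nonempty V := Fintype.card_pos_iff.1 (by lia)
  obtain ⟨v, hv⟩ := G.exists_minimal_degree_vertex
  have hcompl : j ≤ #(closedNeighborFinset G v)ᶜ := by
    rw [card_compl, card_closedNeighborFinset]
    lia
  obtain ⟨S, hS, hSj⟩ := exists_subset_card_eq hcompl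
  exact ⟨S, (not_isDomSet_iff_exists_disjoint G).2
    ⟨v, disjoint_compl_right.mono_right hS⟩, hSj⟩

theorem nonDomCount_eq_zero_iff {j : ℕ} :
    nonDomCount G j = 0 ↔ Fintype.card V ≤ j + G.minDegree := by
  rw [nonDomCount, Set.ncard_eq_zero, ← Set.not_nonempty_iff_eq_empty, ← not_lt, not_iff_not]
  constructor
  · rintro ⟨S, hS, rfl⟩
    exact card_add_minDegree_lt_of_not_isDomSet G hS
  · exact exists_not_isDomSet_card_eq G

theorem sInf_domCount_eq_choose :
    sInf {j | domCount G j = (Fintype.card V).choose j} = Fintype.card V - G.minDegree := by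
  suffices {j | domCount G j = (Fintype.card V).choose j} =
      Set.Ici (Fintype.card V - G.minDegree) by rw [this, csInf_Ici]
  ext j
  rw [Set.mem_ofPred_eq, Set.mem_Ici, tsub_le_iff_right, ← nonDomCount_eq_zero_iff,
    ← domCount_add_nonDomCount, left_eq_add]

theorem not_isDomSet_iff_exists_compl_eq [DecidableEq V] {S : Finset V}
    (hS : #S + G.minDegree + 1 = Fintype.card V) :
    ¬ IsDomSet G S ↔ ∃ v, G.degree v = G.minDegree ∧ (closedNeighborFinset G v)ᶜ = S := by
  rw [not_isDomSet_iff_exists_disjoint]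
  refine exists_congr fun v ↦ ⟨fun hv ↦ ?_, ?_⟩
  · have hsub : closedNeighborFinset G v ⊆ Sᶜ := subset_compl_iff_disjoint_right.2 hv
    have hcard : #Sᶜ = G.minDegree + 1 := by
      rw [card_compl]
      lia
    have hdeg := G.minDegree_le_degree v
    have heq : closedNeighborFinset G v = Sᶜ :=
      eq_of_subset_of_card_le hsub (by rw [hcard, card_closedNeighborFinset]; lia)
    refine ⟨?_, by rw [heq, compl_compl]⟩
    rwa [← heq, card_closedNeighborFinset, Nat.add_right_cancel_iff] at hcard
  · rintro ⟨-, rfl⟩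
    exact disjoint_compl_right

theorem nonDomCount_eq_card_image_closedNeighborFinset [DecidableEq V] {j : ℕ}
    (hj : j + G.minDegree + 1 = Fintype.card V) :
    nonDomCount G j =
      #(image (fun v ↦ closedNeighborFinset G v) {v | G.degree v = G.minDegree}) := by
  rw [← card_image_of_injective _ compl_injective, image_image, nonDomCount,
    ← Set.ncard_coe_finset]
  congr 1
  ext S
  simp only [Set.mem_ofPred_eq, mem_coe, mem_image, mem_filter_univ, Function.comp_apply]
  constructor
  · rintro ⟨hS, rfl⟩
    exact (not_isDomSet_iff_exists_compl_eq G hj).1 hS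
  · rintro ⟨v, hv, rfl⟩
    have hcard : #(closedNeighborFinset G v)ᶜ = j := by
      rw [card_compl, card_closedNeighborFinset]
      lia
    exact ⟨(not_isDomSet_iff_exists_compl_eq G (hcard ▸ hj)).2 ⟨v, hv, rfl⟩, hcard⟩

end MinDegree

theorem card_minDegree_vertices_eq_general [Fintype V] [Nonempty V] [DecidableEq V]
    [DecidableRel G.Adj] (l : ℕ)
    (hl : l = sInf {j | domCount G j = (Fintype.card V).choose j}) :
    G.minDegree = Fintype.card V - l ∧
    #(image (fun v ↦ closedNeighborFinset G v) {v | G.degree v = G.minDegree}) =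
      (Fintype.card V).choose (l - 1) - domCount G (l - 1) := by
  rw [sInf_domCount_eq_choose] at hl
  have hlt := G.minDegree_lt_card
  refine ⟨by lia, ?_⟩
  rw [← nonDomCount_eq_card_image_closedNeighborFinset G (j := l - 1) (by lia),
    ← domCount_add_nonDomCount, Nat.add_sub_cancel_left]

end

theorem card_minDegree_vertices_eq {V : Type*} [Fintype V] [Nonempty V] [DecidableEq V]
    (G : SimpleGraph V) [DecidableRel G.Adj] (l : ℕ)
    (hl : l = sInf {j : ℕ | domCount G j = (Fintype.card V).choose j})
    (hnbr : ∀ u v : V, u ≠ v → G.degree u = G.minDegree → G.degree v = G.minDegree →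
      insert u (G.neighborFinset u) ≠ insert v (G.neighborFinset v)) :
    G.minDegree = Fintype.card V - l ∧
    (Finset.univ.filter fun v : V => G.degree v = G.minDegree).card =
      (Fintype.card V).choose (l - 1) - domCount G (l - 1) := by
  obtain ⟨hδ, hcard⟩ := card_minDegree_vertices_eq_general G l hl
  refine ⟨hδ, hcard ▸ (Finset.card_image_of_injOn fun u hu v hv huv ↦ ?_).symm⟩
  rw [Finset.mem_coe, Finset.mem_filter_univ] at hu hv
  exact by_contra fun hne ↦ hnbr u v hne hu hv huv
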